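/- arXiv:math/0604047 — 3 statements merged into one kernel-verified Lean document; each statement's English description precedes it below -/
import Mathlib

section
/- Let X be an infinite compact metric space, let α_1, …, α_d be pairwise commuting homeomorphisms of X, let μ be a strictly positive Borel probability measure on X invariant under the action of α_1, …, α_d, and suppose that the homeomorphism α_1 is minimal. Then there exist: a compact metrizable space Y homeomorphic to the Cantor space {0,1}^ℕ; pairwise commuting homeomorphisms β_1, …, β_d of Y with β_1 minimal; a Borel probability measure ν on Y invariant under the action of β_1, …, β_d; and a continuous surjection s : Y → X such that s ∘ β_j = α_j ∘ s for every j = 1, …, d and the pushforward measure s_*ν equals μ. -/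
/-- A bundled compact metric space equipped with its Borel σ-algebra. -/
structure CompactMetricBundle where
  carrier : Type
  [metricSpace : MetricSpace carrier]
  [compactSpace : CompactSpace carrier]
  [measurableSpace : MeasurableSpace carrier]
  [borelSpace : BorelSpace carrier]

attribute [instance] CompactMetricBundle.metricSpace CompactMetricBundle.compactSpace
  CompactMetricBundle.measurableSpace CompactMetricBundle.borelSpace

open MeasureTheory

/-- A homeomorphism is minimal if its only closed invariant sets are `∅` and the whole
space. -/
def IsMinimalHomeo {Y : Type*} [TopologicalSpace Y] (β : Y ≃ₜ Y) : Prop :=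
  ∀ F : Set Y, IsClosed F → β '' F = F → F = ∅ ∨ F = Set.univ

/-!
Balls with suitably chosen radii give a countable family of open sets with `μ`-null boundaries that
separates points, and adding the translates under the group generated by the homeomorphisms makes
the family equivariant. Off the boundaries, a point of `X` is coded by the sequence recording which
of the sets contain it. The closure of the set of coded points is a zero-dimensional extension of
`X` on which the group acts by homeomorphisms, because it merely permutes the coordinates of the
codes. The projection to `X` is injective over the points that avoid all boundaries, and these have
full measure and are dense since `μ` is strictly positive. Hence `μ` lifts to an invariant measure,
and no proper closed subset of the extension projects onto `X`; consequently minimality and the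
absence of isolated points lift too, and Brouwer's theorem identifies the extension with the Cantor
space.
-/

open Function Set TopologicalSpace Topology

section IrreducibleMaps

variable {X Y Z : Type*} [TopologicalSpace Y] [TopologicalSpace Z]

/-- An irreducible surjection: no proper closed subset of the domain is mapped onto the codomain.
Minimality and the absence of isolated points both lift along such maps. -/
structure IsIrreducibleMap (s : Y → X) : Prop where
  surjective : Surjective s
  eq_univ_of_image_eq_univ : ∀ F : Set Y, IsClosed F → s '' F = univ → F = univ

theorem isIrreducibleMap_of_dense_of_preimage_singleton {s : Y → X} (hs : Surjective s)
    {D : Set Y} (hD : Dense D) (hfib : ∀ y ∈ D, s ⁻¹' {s y} = {y}) : IsIrreducibleMap s where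
  surjective := hs
  eq_univ_of_image_eq_univ F hF hsF := by
    have hDF : D ⊆ F := fun y hy ↦ by
      obtain ⟨z, hz, hzy⟩ := hsF.ge (mem_univ (s y))
      have hz_eq : z = y := (hfib y hy).le hzy
      exact hz_eq ▸ hz
    exact (hD.mono hDF).closure_eq ▸ hF.closure_eq.symm

theorem IsIrreducibleMap.comp_homeomorph {s : Y → X} (hs : IsIrreducibleMap s) (e : Z ≃ₜ Y) :
    IsIrreducibleMap (s ∘ e) where
  surjective := hs.surjective.comp e.surjective
  eq_univ_of_image_eq_univ F hF hsF := by
    rw [image_comp] at hsF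
    have himage : e '' F = univ := hs.eq_univ_of_image_eq_univ _ (e.isClosedMap F hF) hsF
    rwa [← image_univ_of_surjective e.surjective, e.injective.image_injective.eq_iff] at himage

variable [TopologicalSpace X]

theorem IsIrreducibleMap.isMinimalHomeo {s : Y → X} (hs : IsIrreducibleMap s)
    (hclosed : IsClosedMap s) {α : X ≃ₜ X} {β : Y ≃ₜ Y} (hsemi : Semiconj s β α)
    (hα : IsMinimalHomeo α) : IsMinimalHomeo β := by
  intro F hF hβF
  have hinv : α '' (s '' F) = s '' F := by
    rw [← hsemi.set_image F, hβF]
  exact (hα (s '' F) (hclosed F hF) hinv).imp image_eq_empty.mp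
    (hs.eq_univ_of_image_eq_univ F hF)

theorem perfectSpace_iff_forall_not_isOpen_singleton :
    PerfectSpace X ↔ ∀ x : X, ¬ IsOpen {x} := by
  simp only [perfectSpace_iff_forall_not_isolated, isOpen_singleton_iff_punctured_nhds,
    Filter.neBot_iff, ne_eq]

-- If `{y}` were open, the image of its complement would be closed and contain the dense set
-- `{s y}ᶜ`, hence be everything.
theorem IsIrreducibleMap.perfectSpace [PerfectSpace X] {s : Y → X} (hs : IsIrreducibleMap s)
    (hclosed : IsClosedMap s) : PerfectSpace Y := by
  refine perfectSpace_iff_forall_not_isOpen_singleton.mpr fun y hy ↦ ?_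
  have hsub : {s y}ᶜ ⊆ s '' {y}ᶜ := fun x hx ↦ by
    obtain ⟨z, rfl⟩ := hs.surjective x
    exact ⟨z, fun hz ↦ hx (congrArg s hz), rfl⟩
  have himage : s '' {y}ᶜ = univ := by
    rw [← (hclosed _ hy.isClosed_compl).closure_eq]
    exact ((dense_compl_singleton (s y)).mono hsub).closure_eq
  exact (hs.eq_univ_of_image_eq_univ _ hy.isClosed_compl himage).ge (mem_univ y) rfl

theorem IsMinimalHomeo.perfectSpace [CompactSpace X] [Infinite X] {α : X ≃ₜ X}
    (hα : IsMinimalHomeo α) : PerfectSpace X := by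
  let isolated : Set X := {x | IsOpen {x}}
  have hopen : IsOpen isolated := isOpen_iff_forall_mem_open.mpr fun x hx ↦
    ⟨{x}, singleton_subset_iff.mpr hx, hx, rfl⟩
  have hinv : α '' isolatedᶜ = isolatedᶜ := by
    rw [α.image_eq_preimage_symm]
    ext x
    simp only [isolated, mem_preimage, mem_compl_iff, mem_ofPred_eq]
    rw [← image_singleton, α.symm.isOpen_image]
  rcases hα _ hopen.isClosed_compl hinv with hempty | huniv
  · have : DiscreteTopology X :=
      discreteTopology_iff_isOpen_singleton.mpr (eq_univ_iff_forall.mp (compl_empty_iff.mp hempty))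
    exact (not_finite_iff_infinite.mpr ‹_› finite_of_compact_of_discrete).elim
  · exact perfectSpace_iff_forall_not_isOpen_singleton.mpr (eq_univ_iff_forall.mp huniv)

end IrreducibleMaps

section CantorCharacterization

variable {Y : Type*}

open Classical in
/-- The address of `y` to depth `n` when every cell `A` of depth `k` is cut into `A ∩ cut k A` and
`A \ cut k A`; a cell is the set of points with a given address, listed with the last digit
first. -/
noncomputable def address (cut : ℕ → Set Y → Set Y) : ℕ → Y → List Bool
  | 0, _ => []
  | n + 1, y => decide (y ∈ cut n (address cut n ⁻¹' {address cut n y})) :: address cut n y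

open Classical in
/-- The infinite sequence of digits whose initial segments are the addresses of `y`. -/
noncomputable def itinerary (cut : ℕ → Set Y → Set Y) (y : Y) (n : ℕ) : Bool :=
  decide (y ∈ cut n (address cut n ⁻¹' {address cut n y}))

variable {cut : ℕ → Set Y → Set Y}

theorem address_succ (n : ℕ) (y : Y) :
    address cut (n + 1) y = itinerary cut y n :: address cut n y :=
  rfl

theorem address_eq_res (n : ℕ) (y : Y) : address cut n y = PiNat.res (itinerary cut y) n := by
  induction n with
  | zero => rfl
  | succ n ih => rw [address_succ, PiNat.res_succ, ih]

theorem itinerary_eq_true_iff {n : ℕ} {y : Y} {l : List Bool} (hy : address cut n y = l) :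
    itinerary cut y n = true ↔ y ∈ cut n (address cut n ⁻¹' {l}) := by
  classical
  rw [← hy]
  exact decide_eq_true_iff

theorem address_preimage_cons_true (n : ℕ) (l : List Bool) :
    address cut (n + 1) ⁻¹' {true :: l} =
      address cut n ⁻¹' {l} ∩ cut n (address cut n ⁻¹' {l}) := by
  ext y
  simp only [mem_preimage, mem_singleton_iff, address_succ, List.cons.injEq, mem_inter_iff]
  rw [and_comm]
  exact and_congr_right itinerary_eq_true_iff

theorem address_preimage_cons_false (n : ℕ) (l : List Bool) :
    address cut (n + 1) ⁻¹' {false :: l} =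
      address cut n ⁻¹' {l} \ cut n (address cut n ⁻¹' {l}) := by
  ext y
  simp only [mem_preimage, mem_singleton_iff, address_succ, List.cons.injEq, mem_sdiff]
  rw [and_comm, ← Bool.not_eq_true]
  exact and_congr_right fun hy ↦ not_congr (itinerary_eq_true_iff hy)

theorem injective_itinerary {C : ℕ → Set Y} (hsep : ∀ y z, y ≠ z → ∃ n, y ∈ C n ∧ z ∉ C n)
    (hcut : ∀ n y z, address cut n z = address cut n y →
      (y ∈ cut n (address cut n ⁻¹' {address cut n y}) ↔
        z ∈ cut n (address cut n ⁻¹' {address cut n y})) → (y ∈ C n ↔ z ∈ C n)) :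
    Injective (itinerary cut) := by
  intro y z hyz
  by_contra hne
  obtain ⟨n, hy, hz⟩ := hsep y z hne
  have haddress : address cut n z = address cut n y := by
    rw [address_eq_res, address_eq_res, hyz]
  have hdigit : y ∈ cut n (address cut n ⁻¹' {address cut n y}) ↔
      z ∈ cut n (address cut n ⁻¹' {address cut n y}) := by
    rw [← itinerary_eq_true_iff rfl, ← itinerary_eq_true_iff haddress, hyz]
  exact hz ((hcut n y z haddress hdigit).mp hy)

variable [TopologicalSpace Y]

theorem isClopen_and_nonempty_address_preimage [Nonempty Y]
    (hcut : ∀ n A, IsClopen A → A.Nonempty →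
      IsClopen (cut n A) ∧ (A ∩ cut n A).Nonempty ∧ (A \ cut n A).Nonempty)
    (w : ℕ → Bool) (n : ℕ) :
    IsClopen (address cut n ⁻¹' {PiNat.res w n}) ∧
      (address cut n ⁻¹' {PiNat.res w n}).Nonempty := by
  induction n with
  | zero => exact ⟨by simp [address, isClopen_univ], Classical.arbitrary Y, rfl⟩
  | succ n ih =>
    obtain ⟨hclopen, hmeet, hmeet_compl⟩ := hcut n _ ih.1 ih.2
    rw [PiNat.res_succ]
    cases w n
    · rw [address_preimage_cons_false]
      exact ⟨ih.1.diff hclopen, hmeet_compl⟩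
    · rw [address_preimage_cons_true]
      exact ⟨ih.1.inter hclopen, hmeet⟩

theorem continuous_itinerary
    (hclopen : ∀ y n, IsClopen (address cut n ⁻¹' {address cut n y})) :
    Continuous (itinerary cut) := by
  refine continuous_pi fun n ↦ IsLocallyConstant.continuous ?_
  refine (IsLocallyConstant.iff_exists_open _).mpr fun y ↦
    ⟨_, (hclopen y (n + 1)).isOpen, rfl, fun z hz ↦ ?_⟩
  exact (List.cons.inj hz).1

theorem surjective_itinerary [CompactSpace Y]
    (hcell : ∀ w n, IsClopen (address cut n ⁻¹' {PiNat.res w n}) ∧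
      (address cut n ⁻¹' {PiNat.res w n}).Nonempty) :
    Surjective (itinerary cut) := by
  intro w
  have hanti : ∀ n, address cut (n + 1) ⁻¹' {PiNat.res w (n + 1)} ⊆
      address cut n ⁻¹' {PiNat.res w n} := fun n z hz ↦ (List.cons.inj hz).2
  obtain ⟨y, hy⟩ := IsCompact.nonempty_iInter_of_sequence_nonempty_isCompact_isClosed _ hanti
    (fun n ↦ (hcell w n).2) (hcell w 0).1.isClosed.isCompact fun n ↦ (hcell w n).1.isClosed
  refine ⟨y, PiNat.res_injective (funext fun n ↦ ?_)⟩
  rw [← address_eq_res]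
  exact mem_iInter.mp hy n

theorem exists_isClopen_split [CompactSpace Y] [T2Space Y] [TotallyDisconnectedSpace Y]
    [PerfectSpace Y] {A C : Set Y} (hA : IsOpen A) (hne : A.Nonempty) (hC : IsClopen C) :
    ∃ B, IsClopen B ∧ (A ∩ B).Nonempty ∧ (A \ B).Nonempty ∧
      ∀ y ∈ A, ∀ z ∈ A, (y ∈ B ↔ z ∈ B) → (y ∈ C ↔ z ∈ C) := by
  by_cases hsplit : (A ∩ C).Nonempty ∧ (A \ C).Nonempty
  · exact ⟨C, hC, hsplit.1, hsplit.2, fun _ _ _ _ ↦ id⟩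
  have hconst : ∀ y ∈ A, ∀ z ∈ A, (y ∈ C ↔ z ∈ C) := fun y hy z hz ↦ by
    by_contra hyz
    by_cases hyC : y ∈ C
    · exact hsplit ⟨⟨y, hy, hyC⟩, z, hz, fun hzC ↦ hyz (iff_of_true hyC hzC)⟩
    · exact hsplit ⟨⟨z, hz, by_contra fun hzC ↦ hyz (iff_of_false hyC hzC)⟩, y, hy, hyC⟩
  obtain ⟨a, ha, b, hb, hab⟩ : A.Nontrivial := by
    obtain ⟨a, ha⟩ := hne
    refine (eq_singleton_or_nontrivial ha).resolve_left fun hsingle ↦ ?_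
    exact perfectSpace_iff_forall_not_isOpen_singleton.mp ‹_› a (hsingle ▸ hA)
  obtain ⟨B, hB, haB, hbB⟩ := exists_isClopen_of_totally_separated hab
  exact ⟨B, hB, ⟨a, ha, haB⟩, ⟨b, hb, hbB⟩, fun y hy z hz _ ↦ hconst y hy z hz⟩

-- Cells of depth `n` are cut along the `n`-th clopen set when it splits them, and otherwise along
-- any clopen set that does, so all cells are nonempty and distinct points get distinct itineraries.
theorem nonempty_homeomorph_cantor [CompactSpace Y] [T2Space Y] [TotallyDisconnectedSpace Y]
    [SecondCountableTopology Y] [PerfectSpace Y] [Nonempty Y] :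
    Nonempty (Y ≃ₜ (ℕ → Bool)) := by
  have : Countable (Clopens Y) := Clopens.countable_iff_secondCountable.mpr ‹_›
  obtain ⟨C, hC⟩ := exists_surjective_nat (Clopens Y)
  choose! cut hcut using fun n A (hA : IsClopen A) (hne : A.Nonempty) ↦
    exists_isClopen_split hA.isOpen hne (C n).isClopen
  have hcell := isClopen_and_nonempty_address_preimage fun n A hA hne ↦
    ⟨(hcut n A hA hne).1, (hcut n A hA hne).2.1, (hcut n A hA hne).2.2.1⟩
  have hcell_point : ∀ y n, IsClopen (address cut n ⁻¹' {address cut n y}) := fun y n ↦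
    address_eq_res (cut := cut) n y ▸ (hcell (itinerary cut y) n).1
  have hsep : ∀ y z, y ≠ z → ∃ n, y ∈ (C n : Set Y) ∧ z ∉ (C n : Set Y) := fun y z hne ↦ by
    obtain ⟨B, hB, hy, hz⟩ := exists_isClopen_of_totally_separated hne
    obtain ⟨n, hn⟩ := hC ⟨B, hB⟩
    exact ⟨n, hn ▸ hy, hn ▸ hz⟩
  have hinj : Injective (itinerary cut) := injective_itinerary hsep fun n y z hz ↦
    (hcut n _ (hcell_point y n) ⟨y, rfl⟩).2.2.2 y rfl z hz
  exact ⟨(continuous_itinerary hcell_point).homeoOfEquivCompactToT2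
    (f := Equiv.ofBijective _ ⟨hinj, surjective_itinerary hcell⟩)⟩

end CantorCharacterization

section SymbolicExtension

variable {X ι : Type*} [TopologicalSpace X]

/-- The points lying on the boundary of none of the sets `U i`. -/
def regularPoints (U : ι → Set X) : Set X :=
  {x | ∀ i, x ∉ frontier (U i)}

open Classical in
/-- A point together with the binary code recording which of the sets `U i` contain it. -/
noncomputable def coded (U : ι → Set X) (x : X) : X × (ι → Bool) :=
  (x, fun i ↦ decide (x ∈ U i))

/-- The zero-dimensional extension of `X` obtained by cutting `X` along the boundaries of the sets
`U i`: the closure of the set of coded regular points. The factor `X` is kept so that the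
projection to `X` is visibly continuous. -/
def symbolicExtension (U : ι → Set X) : Set (X × (ι → Bool)) :=
  closure (coded U '' regularPoints U)

/-- The projection of the symbolic extension to the space it extends. -/
def symbolicProjection (U : ι → Set X) : C(symbolicExtension U, X) where
  toFun z := z.1.1
  continuous_toFun := by fun_prop

variable {U : ι → Set X}

theorem coded_mem_symbolicExtension {x : X} (hx : x ∈ regularPoints U) :
    coded U x ∈ symbolicExtension U :=
  subset_closure (mem_image_of_mem _ hx)

theorem isClosed_symbolicExtension : IsClosed (symbolicExtension U) :=
  isClosed_closure

theorem fst_mem_closure_of_snd {z : X × (ι → Bool)} (hz : z ∈ symbolicExtension U) (i : ι) :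
    z.1 ∈ closure {x | (coded U x).2 i = z.2 i} := by
  have hopen : IsOpen {w : X × (ι → Bool) | w.2 i = z.2 i} :=
    (isOpen_discrete {z.2 i}).preimage (by fun_prop : Continuous fun w : X × (ι → Bool) ↦ w.2 i)
  refine map_mem_closure continuous_fst (hopen.inter_closure ⟨rfl, hz⟩) ?_
  rintro _ ⟨hw, x, -, rfl⟩
  exact hw

theorem fst_mem_closure_of_snd_eq_true {z : X × (ι → Bool)} (hz : z ∈ symbolicExtension U)
    {i : ι} (hi : z.2 i = true) : z.1 ∈ closure (U i) := by
  simpa [coded, hi] using fst_mem_closure_of_snd hz i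

theorem fst_mem_closure_compl_of_snd_eq_false {z : X × (ι → Bool)}
    (hz : z ∈ symbolicExtension U) {i : ι} (hi : z.2 i = false) : z.1 ∈ closure (U i)ᶜ := by
  simpa [coded, hi, compl_def] using fst_mem_closure_of_snd hz i

theorem eq_coded_of_fst_mem_regularPoints {z : X × (ι → Bool)} (hz : z ∈ symbolicExtension U)
    (hreg : z.1 ∈ regularPoints U) : z = coded U z.1 := by
  refine Prod.ext rfl (funext fun i ↦ ?_)
  have hfrontier := hreg i
  rw [frontier_eq_closure_inter_closure] at hfrontier
  cases hi : z.2 i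
  · have hnot : z.1 ∉ U i := fun hmem ↦
      hfrontier ⟨subset_closure hmem, fst_mem_closure_compl_of_snd_eq_false hz hi⟩
    simp [coded, hnot]
  · have hmem : z.1 ∈ U i := by_contra fun hnot ↦
      hfrontier ⟨fst_mem_closure_of_snd_eq_true hz hi, subset_closure hnot⟩
    simp [coded, hmem]

theorem injective_symbolicExtension_snd (hopen : ∀ i, IsOpen (U i))
    (hsep : ∀ x y, x ≠ y → ∃ i, x ∈ U i ∧ y ∉ closure (U i)) :
    Injective fun z : symbolicExtension U ↦ z.1.2 := by
  intro z w hzw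
  refine Subtype.ext (Prod.ext ?_ hzw)
  by_contra hne
  obtain ⟨i, hz, hw⟩ := hsep _ _ hne
  have hzi : z.1.2 i = true := by
    by_contra hfalse
    have hcompl := fst_mem_closure_compl_of_snd_eq_false z.2 (Bool.eq_false_of_not_eq_true hfalse)
    rw [(hopen i).isClosed_compl.closure_eq] at hcompl
    exact hcompl hz
  exact hw (fst_mem_closure_of_snd_eq_true w.2 ((congrFun hzw i).symm.trans hzi))

theorem totallyDisconnectedSpace_symbolicExtension (hopen : ∀ i, IsOpen (U i))
    (hsep : ∀ x y, x ≠ y → ∃ i, x ∈ U i ∧ y ∉ closure (U i)) :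
    TotallyDisconnectedSpace (symbolicExtension U) where
  isTotallyDisconnected_univ := isTotallyDisconnected_of_image
    (by fun_prop : Continuous fun z : symbolicExtension U ↦ z.1.2).continuousOn
    (injective_symbolicExtension_snd hopen hsep)
    (isTotallyDisconnected_of_totallyDisconnectedSpace _)

instance [CompactSpace X] : CompactSpace (symbolicExtension U) :=
  isCompact_iff_compactSpace.mp isClosed_symbolicExtension.isCompact

theorem surjective_symbolicProjection [CompactSpace X] [T2Space X]
    (hdense : Dense (regularPoints U)) : Surjective (symbolicProjection U) := by
  have hrange : regularPoints U ⊆ range (symbolicProjection U) := fun x hx ↦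
    ⟨⟨coded U x, coded_mem_symbolicExtension hx⟩, rfl⟩
  have hclosed : IsClosed (range (symbolicProjection U)) :=
    (isCompact_range (symbolicProjection U).continuous).isClosed
  exact range_eq_univ.mp (hclosed.closure_eq ▸ (hdense.mono hrange).closure_eq)

theorem dense_symbolicProjection_preimage_regularPoints :
    Dense (symbolicProjection U ⁻¹' regularPoints U) := by
  refine Subtype.dense_iff.mpr (closure_mono ?_)
  rintro _ ⟨x, hx, rfl⟩
  exact ⟨⟨coded U x, coded_mem_symbolicExtension hx⟩, hx, rfl⟩

theorem isIrreducibleMap_symbolicProjection [CompactSpace X] [T2Space X]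
    (hdense : Dense (regularPoints U)) : IsIrreducibleMap (symbolicProjection U) := by
  refine isIrreducibleMap_of_dense_of_preimage_singleton (surjective_symbolicProjection hdense)
    dense_symbolicProjection_preimage_regularPoints fun z hz ↦ ?_
  refine eq_singleton_iff_unique_mem.mpr ⟨rfl, fun w hw ↦ Subtype.ext ?_⟩
  have hfst : w.1.1 = z.1.1 := hw
  rw [eq_coded_of_fst_mem_regularPoints z.2 hz, ← hfst]
  exact eq_coded_of_fst_mem_regularPoints w.2 (hfst ▸ hz)

end SymbolicExtension

section Lift

variable {X ι G : Type*} [TopologicalSpace X] {U : ι → Set X}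

/-- The homeomorphism `h` acting on coded points, with the codes permuted along `σ`. -/
def codedHomeo (h : X ≃ₜ X) (σ : Equiv.Perm ι) : X × (ι → Bool) ≃ₜ X × (ι → Bool) :=
  h.prodCongr (Homeomorph.piCongrLeft (Y := fun _ ↦ Bool) σ)

theorem codedHomeo_apply_snd (h : X ≃ₜ X) (σ : Equiv.Perm ι) (z : X × (ι → Bool)) (i : ι) :
    (codedHomeo h σ z).2 (σ i) = z.2 i :=
  Homeomorph.piCongrLeft_apply_apply (Y := fun _ ↦ Bool) σ z.2 i

theorem codedHomeo_one : codedHomeo (1 : X ≃ₜ X) (1 : Equiv.Perm ι) = 1 :=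
  rfl

theorem codedHomeo_mul (h k : X ≃ₜ X) (σ τ : Equiv.Perm ι) :
    codedHomeo (h * k) (σ * τ) = codedHomeo h σ * codedHomeo k τ := by
  refine Homeomorph.ext fun z ↦ Prod.ext rfl (funext fun i ↦ ?_)
  obtain ⟨j, rfl⟩ := (σ * τ).surjective i
  rw [codedHomeo_apply_snd, Equiv.Perm.mul_apply, Homeomorph.mul_apply, codedHomeo_apply_snd,
    codedHomeo_apply_snd]

theorem semiconj_coded {h : X ≃ₜ X} {σ : Equiv.Perm ι} (hσ : ∀ i, h ⁻¹' U (σ i) = U i) :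
    Semiconj (coded U) h (codedHomeo h σ) := by
  refine fun x ↦ Prod.ext rfl (funext fun i ↦ ?_)
  obtain ⟨j, rfl⟩ := σ.surjective i
  rw [codedHomeo_apply_snd]
  exact decide_eq_decide.mpr (Set.ext_iff.mp (hσ j) x)

theorem preimage_regularPoints {h : X ≃ₜ X} {σ : Equiv.Perm ι} (hσ : ∀ i, h ⁻¹' U (σ i) = U i) :
    h ⁻¹' regularPoints U = regularPoints U := by
  ext x
  have hfrontier : ∀ i, h x ∈ frontier (U (σ i)) ↔ x ∈ frontier (U i) := fun i ↦ by
    rw [← hσ i, ← h.preimage_frontier, mem_preimage]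
  exact σ.forall_congr_right.symm.trans (forall_congr' fun i ↦ not_congr (hfrontier i))

theorem preimage_symbolicExtension {h : X ≃ₜ X} {σ : Equiv.Perm ι}
    (hσ : ∀ i, h ⁻¹' U (σ i) = U i) :
    codedHomeo h σ ⁻¹' symbolicExtension U = symbolicExtension U := by
  have hreg : h '' regularPoints U = regularPoints U :=
    ((eq_preimage_iff_image_eq h.bijective).mp (preimage_regularPoints hσ).symm)
  refine ((eq_preimage_iff_image_eq (codedHomeo h σ).bijective).mpr ?_).symm
  rw [symbolicExtension, Homeomorph.image_closure, ← (semiconj_coded hσ).set_image, hreg]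

/-- The lift to the symbolic extension of an action on `X` that permutes the sets `U i`. -/
def symbolicLift [Group G] (ρ : G →* (X ≃ₜ X)) (σ : G →* Equiv.Perm ι)
    (hσ : ∀ g i, ρ g ⁻¹' U (σ g i) = U i) :
    G →* (symbolicExtension U ≃ₜ symbolicExtension U) where
  toFun g := (codedHomeo (ρ g) (σ g)).sets (preimage_symbolicExtension (hσ g)).symm
  map_one' := by
    simp only [map_one, codedHomeo_one]
    rfl
  map_mul' g k := by
    simp only [map_mul, codedHomeo_mul]
    rfl

theorem semiconj_symbolicProjection [Group G] {ρ : G →* (X ≃ₜ X)} {σ : G →* Equiv.Perm ι}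
    (hσ : ∀ g i, ρ g ⁻¹' U (σ g i) = U i) (g : G) :
    Semiconj (symbolicProjection U) (symbolicLift ρ σ hσ g) (ρ g) :=
  fun _ ↦ rfl

end Lift

section Measure

variable {X ι : Type*} [TopologicalSpace X] [MeasurableSpace X] {U : ι → Set X} {μ : Measure X}

/-- The distribution of the coded point of a `μ`-random point, as a measure on the symbolic
extension. -/
noncomputable def symbolicMeasure (U : ι → Set X) (μ : Measure X) :
    Measure (symbolicExtension U) :=
  (μ.map (coded U)).comap Subtype.val

theorem ae_mem_regularPoints [Countable ι] (hnull : ∀ i, μ (frontier (U i)) = 0) :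
    ∀ᵐ x ∂μ, x ∈ regularPoints U :=
  ae_all_iff.mpr fun i ↦ measure_eq_zero_iff_ae_notMem.mp (hnull i)

variable [BorelSpace X]

theorem measurable_coded (hopen : ∀ i, IsOpen (U i)) : Measurable (coded U) := by
  classical
  exact measurable_id.prodMk (measurable_pi_lambda _ fun i ↦
    (measurable_to_bool (by simpa [preimage] using (hopen i).measurableSet)))

variable [Countable ι]

theorem measurePreserving_subtypeVal_symbolicMeasure (hopen : ∀ i, IsOpen (U i))
    (hnull : ∀ i, μ (frontier (U i)) = 0) :
    MeasurePreserving Subtype.val (symbolicMeasure U μ) (μ.map (coded U)) := by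
  have hmeas : MeasurableSet (symbolicExtension U) := isClosed_symbolicExtension.measurableSet
  have hmem : ∀ᵐ z ∂μ.map (coded U), z ∈ symbolicExtension U :=
    (ae_map_iff (measurable_coded hopen).aemeasurable hmeas).mpr
      ((ae_mem_regularPoints hnull).mono fun _ ↦ coded_mem_symbolicExtension)
  exact ⟨measurable_subtype_coe, by
    rw [symbolicMeasure, map_comap_subtype_coe hmeas, Measure.restrict_eq_self_of_ae_mem hmem]⟩

theorem measurePreserving_symbolicProjection (hopen : ∀ i, IsOpen (U i))
    (hnull : ∀ i, μ (frontier (U i)) = 0) :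
    MeasurePreserving (symbolicProjection U) (symbolicMeasure U μ) μ := by
  have hfst : MeasurePreserving Prod.fst (μ.map (coded U)) μ :=
    MeasurePreserving.map_of_comp (f := coded U) (.id μ) measurable_fst (measurable_coded hopen)
  exact hfst.comp (measurePreserving_subtypeVal_symbolicMeasure hopen hnull)

theorem measurePreserving_symbolicLift {G : Type*} [Group G] {ρ : G →* (X ≃ₜ X)}
    {σ : G →* Equiv.Perm ι} (hopen : ∀ i, IsOpen (U i)) (hnull : ∀ i, μ (frontier (U i)) = 0)
    (hσ : ∀ g i, ρ g ⁻¹' U (σ g i) = U i) {g : G} (hg : MeasurePreserving (ρ g) μ μ) :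
    MeasurePreserving (symbolicLift ρ σ hσ g) (symbolicMeasure U μ) (symbolicMeasure U μ) := by
  have hval := measurePreserving_subtypeVal_symbolicMeasure hopen hnull
  have hcoded : MeasurePreserving (codedHomeo (ρ g) (σ g)) (μ.map (coded U)) (μ.map (coded U)) :=
    ((measurable_coded hopen).measurePreserving μ).of_semiconj hg (semiconj_coded (hσ g))
      (codedHomeo (ρ g) (σ g)).continuous.measurable
  have hemb : MeasurableEmbedding (Subtype.val : symbolicExtension U → _) :=
    .subtype_coe isClosed_symbolicExtension.measurableSet
  have hlift : Measurable (symbolicLift ρ σ hσ g) :=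
    (symbolicLift ρ σ hσ g).continuous.measurable
  have hmap : ((symbolicMeasure U μ).map (symbolicLift ρ σ hσ g)).map Subtype.val =
      (symbolicMeasure U μ).map Subtype.val := by
    rw [Measure.map_map hemb.measurable hlift, hval.map_eq]
    exact (hcoded.comp hval).map_eq
  refine ⟨hlift, ?_⟩
  rw [← hemb.comap_map (Measure.map _ _), hmap, hemb.comap_map]

end Measure

section Existence

variable {X : Type*} [TopologicalSpace X] [MetrizableSpace X] [MeasurableSpace X] [BorelSpace X]

theorem exists_isOpen_null_frontier_separating [SeparableSpace X] [Nonempty X] (μ : Measure X)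
    [SFinite μ] :
    ∃ U : ℕ × ℕ → Set X, (∀ i, IsOpen (U i)) ∧ (∀ i, μ (frontier (U i)) = 0) ∧
      ∀ x y, x ≠ y → ∃ i, x ∈ U i ∧ y ∉ closure (U i) := by
  let _ : MetricSpace X := metrizableSpaceMetric X
  choose r hr hnull using fun (x : X) (k : ℕ) ↦
    exists_null_frontier_thickening μ {x} (a := 1 / ((k : ℝ) + 2)) (b := 1 / ((k : ℝ) + 1))
      (by gcongr; norm_num)
  refine ⟨fun i ↦ Metric.ball (denseSeq X i.1) (r (denseSeq X i.1) i.2),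
    fun _ ↦ Metric.isOpen_ball, fun i ↦ ?_, fun x y hxy ↦ ?_⟩
  · simpa only [Metric.thickening_singleton] using hnull (denseSeq X i.1) i.2
  obtain ⟨k, hk⟩ := exists_nat_one_div_lt (half_pos (dist_pos.mpr hxy))
  obtain ⟨m, hm⟩ := (denseRange_denseSeq X).exists_dist_lt x (by positivity : 0 < 1 / ((k : ℝ) + 2))
  obtain ⟨hr_lower, hr_upper⟩ := hr (denseSeq X m) k
  refine ⟨(m, k), Metric.mem_ball.mpr (hm.trans hr_lower), fun hy ↦ ?_⟩
  have hy_dist : dist y (denseSeq X m) ≤ r (denseSeq X m) k :=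
    Metric.closure_ball_subset_closedBall hy
  linarith [dist_triangle_right x y (denseSeq X m)]

/-- The left translation action of `G` on `G × κ`, which indexes the translates `g • U k` of a
family `U` indexed by `κ`. -/
def translationHom (G κ : Type*) [Group G] : G →* Equiv.Perm (G × κ) where
  toFun g := (Equiv.mulLeft g).prodCongr (Equiv.refl κ)
  map_one' := by ext <;> simp
  map_mul' g k := by ext <;> simp [mul_assoc]

variable {G : Type*} [Group G]

theorem exists_equivariant_separating_family [SeparableSpace X] [Nonempty X] {μ : Measure X}
    [SFinite μ] {ρ : G →* (X ≃ₜ X)} (hρ : ∀ g, MeasurePreserving (ρ g) μ μ) :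
    ∃ U : G × (ℕ × ℕ) → Set X, (∀ p, IsOpen (U p)) ∧ (∀ p, μ (frontier (U p)) = 0) ∧
      (∀ x y, x ≠ y → ∃ p, x ∈ U p ∧ y ∉ closure (U p)) ∧
      ∀ g p, ρ g ⁻¹' U (translationHom G (ℕ × ℕ) g p) = U p := by
  obtain ⟨V, hopen, hnull, hsep⟩ := exists_isOpen_null_frontier_separating μ
  refine ⟨fun p ↦ ρ p.1⁻¹ ⁻¹' V p.2, fun p ↦ (hopen p.2).preimage (ρ p.1⁻¹).continuous,
    fun p ↦ ?_, fun x y hxy ↦ ?_, fun g p ↦ ?_⟩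
  · rw [← (ρ p.1⁻¹).preimage_frontier,
      (hρ p.1⁻¹).measure_preimage isClosed_frontier.nullMeasurableSet, hnull]
  · obtain ⟨i, hx, hy⟩ := hsep x y hxy
    refine ⟨(1, i), ?_⟩
    simp only [inv_one, map_one]
    exact ⟨hx, hy⟩
  · ext x
    simp [translationHom]

/-- Transport of homeomorphisms along a homeomorphism, as a group homomorphism. -/
def conjHom {Y Z : Type*} [TopologicalSpace Y] [TopologicalSpace Z] (e : Y ≃ₜ Z) :
    (Y ≃ₜ Y) →* (Z ≃ₜ Z) where
  toFun h := (e.symm.trans h).trans e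
  map_one' := by ext; simp
  map_mul' h k := by ext; simp

theorem semiconj_conjHom {Y Z : Type*} [TopologicalSpace Y] [TopologicalSpace Z] (e : Y ≃ₜ Z)
    (h : Y ≃ₜ Y) : Semiconj e h (conjHom e h) :=
  fun y ↦ congrArg (e ∘ h) (e.symm_apply_apply y).symm

theorem exists_cantor_extension [CompactSpace X] [PerfectSpace X] [Nonempty X] [Countable G]
    (ρ : G →* (X ≃ₜ X)) (μ : Measure X) [SFinite μ] [μ.IsOpenPosMeasure]
    (hρ : ∀ g, MeasurePreserving (ρ g) μ μ) :
    ∃ (τ : G →* ((ℕ → Bool) ≃ₜ (ℕ → Bool))) (ν : Measure (ℕ → Bool)) (s : C(ℕ → Bool, X)),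
      IsIrreducibleMap s ∧ (∀ g, Semiconj s (τ g) (ρ g)) ∧
      (∀ g, MeasurePreserving (τ g) ν ν) ∧ MeasurePreserving s ν μ := by
  let _ : MetricSpace X := metrizableSpaceMetric X
  obtain ⟨U, hopen, hnull, hsep, hσ⟩ := exists_equivariant_separating_family hρ
  have hirr : IsIrreducibleMap (symbolicProjection U) :=
    isIrreducibleMap_symbolicProjection (Measure.dense_of_ae (ae_mem_regularPoints hnull))
  have : PerfectSpace (symbolicExtension U) :=
    hirr.perfectSpace (symbolicProjection U).continuous.isClosedMap
  have : TotallyDisconnectedSpace (symbolicExtension U) :=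
    totallyDisconnectedSpace_symbolicExtension hopen hsep
  have : Nonempty (symbolicExtension U) := hirr.surjective.nonempty
  obtain ⟨e⟩ := nonempty_homeomorph_cantor (Y := symbolicExtension U)
  have he : MeasurePreserving e.toMeasurableEquiv (symbolicMeasure U μ) _ :=
    e.continuous.measurable.measurePreserving (symbolicMeasure U μ)
  refine ⟨(conjHom e).comp (symbolicLift ρ (translationHom G _) hσ), (symbolicMeasure U μ).map e,
    (symbolicProjection U).comp e.symm, hirr.comp_homeomorph e.symm, fun g ↦ ?_, fun g ↦ ?_,
    (measurePreserving_symbolicProjection hopen hnull).comp (he.symm _)⟩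
  · exact (semiconj_symbolicProjection hσ g).comp_left
      ((semiconj_conjHom e _).inverse_left e.symm_apply_apply e.apply_symm_apply)
  · exact he.of_semiconj (measurePreserving_symbolicLift hopen hnull hσ (hρ g))
      (semiconj_conjHom e _) (Homeomorph.continuous _).measurable

end Existence

section GeneratedAction

theorem countable_closure_range {G ι : Type*} [Group G] [Countable ι] (f : ι → G) :
    Countable (Subgroup.closure (range f)) := by
  classical
  have : Countable (FreeGroup ι) := FreeGroup.toWord_injective.countable
  rw [← FreeGroup.range_lift_eq_closure]
  exact (FreeGroup.lift f).rangeRestrict_surjective.countable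

variable {X : Type*} [TopologicalSpace X] [MeasurableSpace X] [BorelSpace X] {μ : Measure X}

theorem measurePreserving_of_mem_closure {S : Set (X ≃ₜ X)}
    (hS : ∀ h ∈ S, MeasurePreserving h μ μ) {h : X ≃ₜ X} (hh : h ∈ Subgroup.closure S) :
    MeasurePreserving h μ μ := by
  induction hh using Subgroup.closure_induction with
  | mem h hh => exact hS h hh
  | one => exact .id μ
  | mul h k _ _ hh hk => exact hh.comp hk
  | inv h _ hh => exact hh.symm h.toMeasurableEquiv

theorem measurePreserving_iff_measure_image (h : X ≃ₜ X) :
    MeasurePreserving h μ μ ↔ ∀ E, MeasurableSet E → μ (h '' E) = μ E := by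
  refine ⟨fun hh E _ ↦ ?_, fun hh ↦ ⟨h.continuous.measurable, Measure.ext fun E hE ↦ ?_⟩⟩
  · rw [h.image_eq_preimage_symm]
    exact (hh.symm h.toMeasurableEquiv).measure_preimage_equiv E
  · rw [Measure.map_apply h.continuous.measurable hE,
      ← hh _ (h.continuous.measurable hE), h.image_preimage]

theorem stmt_5_general [CompactSpace X] [MetrizableSpace X] [PerfectSpace X] [Nonempty X]
    [SFinite μ] [μ.IsOpenPosMeasure] {ι : Type*} [Countable ι] (α : ι → X ≃ₜ X)
    (hα : ∀ i, MeasurePreserving (α i) μ μ) :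
    ∃ (β : ι → (ℕ → Bool) ≃ₜ (ℕ → Bool)) (ν : Measure (ℕ → Bool)) (s : C(ℕ → Bool, X)),
      (∀ i j, Commute (α i) (α j) → Commute (β i) (β j)) ∧
      (∀ i, IsMinimalHomeo (α i) → IsMinimalHomeo (β i)) ∧
      (∀ i, MeasurePreserving (β i) ν ν) ∧ Surjective s ∧
      (∀ i, Semiconj s (β i) (α i)) ∧ MeasurePreserving s ν μ := by
  have : Countable (Subgroup.closure (range α)) := countable_closure_range α
  obtain ⟨τ, ν, s, hs, hsemi, hτ, hsν⟩ :=
    exists_cantor_extension (Subgroup.closure (range α)).subtype μ fun h ↦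
      measurePreserving_of_mem_closure (forall_mem_range.mpr hα) h.2
  let gen (i : ι) : Subgroup.closure (range α) :=
    ⟨α i, Subgroup.subset_closure (mem_range_self i)⟩
  exact ⟨fun i ↦ τ (gen i), ν, s,
    fun i j hij ↦ Commute.map (Subtype.ext hij : Commute (gen i) (gen j)) τ,
    fun i ↦ hs.isMinimalHomeo s.continuous.isClosedMap (hsemi (gen i)),
    fun i ↦ hτ (gen i), hs.surjective, fun i ↦ hsemi (gen i), hsν⟩

end GeneratedAction

/-- Corollary 3.3: if moreover `X` is infinite and `α₁` is minimal, then the extension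
can be taken to be a Cantor system whose first homeomorphism is minimal. -/
theorem stmt_5 {X : Type*} [MetricSpace X] [CompactSpace X] [Infinite X]
    [MeasurableSpace X] [BorelSpace X]
    (d : ℕ) (hd : 0 < d) (α : Fin d → X ≃ₜ X)
    (hcomm : ∀ i j : Fin d, ∀ x : X, α i (α j x) = α j (α i x))
    (hmin : IsMinimalHomeo (α ⟨0, hd⟩))
    (μ : Measure X) [IsProbabilityMeasure μ]
    (hpos : ∀ U : Set X, IsOpen U → U.Nonempty → 0 < μ U)
    (hinv : ∀ (j : Fin d) (E : Set X), MeasurableSet E → μ ((α j) '' E) = μ E) :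
    ∃ (Y : CompactMetricBundle) (β : Fin d → Y.carrier ≃ₜ Y.carrier)
      (ν : Measure Y.carrier) (s : C(Y.carrier, X)),
      Nonempty (Y.carrier ≃ₜ (ℕ → Bool)) ∧
      (∀ i j : Fin d, ∀ y : Y.carrier, β i (β j y) = β j (β i y)) ∧
      IsMinimalHomeo (β ⟨0, hd⟩) ∧
      IsProbabilityMeasure ν ∧
      (∀ (j : Fin d) (E : Set Y.carrier), MeasurableSet E → ν ((β j) '' E) = ν E) ∧
      Function.Surjective s ∧
      (∀ (j : Fin d) (y : Y.carrier), s (β j y) = α j (s y)) ∧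
      Measure.map s ν = μ := by
  have : PerfectSpace X := hmin.perfectSpace
  have : μ.IsOpenPosMeasure := ⟨fun U hU hne ↦ (hpos U hU hne).ne'⟩
  obtain ⟨β, ν, s, hβcomm, hβmin, hβν, hs, hsemi, hsν⟩ :=
    stmt_5_general α fun j ↦ (measurePreserving_iff_measure_image (α j)).mpr (hinv j)
  let _ : MetricSpace (ℕ → Bool) := metrizableSpaceMetric _
  exact ⟨⟨ℕ → Bool⟩, β, ν, s, ⟨.refl _⟩,
    fun i j ↦ DFunLike.congr_fun (hβcomm i j (Homeomorph.ext (hcomm i j))), hβmin _ hmin,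
    (Measure.isProbabilityMeasure_map_iff hsν.aemeasurable).mp (hsν.map_eq ▸ ‹_›),
    fun j ↦ (measurePreserving_iff_measure_image (β j)).mp (hβν j), hs, hsemi, hsν.map_eq⟩
end

section
/- Let X be a compact metric space, let α_1, …, α_d be homeomorphisms of X, let μ be a Borel probability measure on X invariant under each α_j, and let (d_n)_{n≥1} be a sequence of positive real numbers with d_n → 0. Then there exists a sequence (P_n)_{n≥1} of finite partitions of X into nonempty Borel sets such that: (i) every element of P_n has diameter less than d_n; (ii) every element of P_n has μ-null frontier; (iii) every element of P_{n+1} is contained in some element of P_n; and (iv) for every E ∈ P_n and every j = 1, …, d, the preimage α_j^{-1}(E) is a union of elements of P_{n+1}. -/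
open MeasureTheory Filter

/-!
Continuity sets (measurable sets with null frontier) form an algebra of sets, and preimages of
continuity sets under continuous maps that pull null sets back to null sets are again continuity
sets. All but countably many balls about a point are continuity sets, so finitely many small ones
cover the space and cut it into a partition `Q n` whose parts are small continuity sets. The
sequence `P 0 = Q 0`, `P (n + 1) = Q (n + 1) ⊓ P n ⊓ ⨅ j, (f j)⁻¹ (P n)`, with common refinements
taken in the semilattice of finite partitions, then has the desired properties.
-/

section Partitions

variable {X Y : Type*}

open scoped Classical in
/-- The partition of the top element of a Boolean algebra into `a` and its complement, where
a part equal to `⊥` is dropped. -/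
noncomputable def complPartition {α : Type*} [BooleanAlgebra α] (a : α) :
    Finpartition (⊤ : α) :=
  .ofErase {a, aᶜ}
    (Finset.supIndep_iff_pairwiseDisjoint.2 <| by
      simpa [Set.pairwiseDisjoint_insert] using fun _ => disjoint_compl_right)
    (by simp)

theorem eq_or_eq_compl_of_mem_complPartition {α : Type*} [BooleanAlgebra α] {a b : α}
    (hb : b ∈ (complPartition a).parts) : b = a ∨ b = aᶜ := by
  classical
  simpa using Finset.mem_of_mem_erase hb

open scoped Classical in
/-- The pullback of a finite partition along a map: its parts are the nonempty preimages of
parts. -/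
noncomputable def preimagePartition (f : X → Y) (P : Finpartition (⊤ : Set Y)) :
    Finpartition (⊤ : Set X) :=
  .ofErase (P.parts.image (f ⁻¹' ·))
    (Finset.supIndep_iff_pairwiseDisjoint.2 <| by
      rw [Finset.coe_image]
      exact (P.pairwiseDisjoint_apply (f := (f ⁻¹' ·)) (fun _ _ => rfl) rfl).image)
    (by
      rw [Finset.sup_image]
      exact P.sup_parts_apply (fun _ _ => rfl) rfl)

theorem mem_preimagePartition {f : X → Y} {P : Finpartition (⊤ : Set Y)} {E : Set X} :
    E ∈ (preimagePartition f P).parts ↔ E ≠ ∅ ∧ ∃ F ∈ P.parts, f ⁻¹' F = E := by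
  simp [preimagePartition]

theorem sUnion_parts (P : Finpartition (⊤ : Set X)) : ⋃₀ (P.parts : Set (Set X)) = Set.univ := by
  rw [← Set.sSup_eq_sUnion, ← Finset.sup_id_eq_sSup, P.sup_parts, Set.top_eq_univ]

theorem exists_preimage_eq_sUnion_of_le {f : X → Y} {P : Finpartition (⊤ : Set X)}
    {Q : Finpartition (⊤ : Set Y)} (hPQ : P ≤ preimagePartition f Q) {E : Set Y}
    (hE : E ∈ Q.parts) : ∃ R ⊆ P.parts, f ⁻¹' E = ⋃₀ (R : Set (Set X)) := by
  classical
  refine ⟨P.parts.filter (· ⊆ f ⁻¹' E), Finset.filter_subset _ _, Set.Subset.antisymm ?_ ?_⟩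
  · intro x hx
    obtain ⟨G, hG, hxG⟩ : x ∈ ⋃₀ (P.parts : Set (Set X)) := sUnion_parts P ▸ Set.mem_univ x
    obtain ⟨_, hF', hGF⟩ := hPQ hG
    obtain ⟨-, F, hF, rfl⟩ := mem_preimagePartition.1 hF'
    obtain rfl : F = E := Q.disjoint.elim_set hF hE (f x) (hGF hxG) hx
    exact ⟨G, Finset.mem_filter.2 ⟨hG, hGF⟩, hxG⟩
  · exact Set.sUnion_subset fun G hG => (Finset.mem_filter.1 hG).2

open scoped Classical in
theorem exists_subset_of_mem_inf_complPartition {C : Finset (Set X)}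
    (hC : ⋃₀ (C : Set (Set X)) = Set.univ) {E : Set X}
    (hE : E ∈ (C.inf complPartition).parts) : ∃ s ∈ C, E ⊆ s := by
  obtain ⟨x, hxE⟩ := Set.nonempty_iff_ne_empty.2 (Finpartition.ne_bot _ hE)
  obtain ⟨s, hs, hxs⟩ : x ∈ ⋃₀ (C : Set (Set X)) := hC ▸ Set.mem_univ x
  obtain ⟨F, hF, hEF⟩ := Finset.inf_le (f := complPartition) hs hE
  obtain rfl | rfl := eq_or_eq_compl_of_mem_complPartition hF
  · exact ⟨F, hs, hEF⟩
  · exact absurd hxs (hEF hxE)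

open scoped Classical in
/-- The coarsest sequence of partitions such that the `n`-th one refines `Q n`, and each one
refines its predecessor as well as the pullbacks of its predecessor along all `f j`. -/
noncomputable def refiningSeq {ι : Type*} [Fintype ι] (f : ι → X → X)
    (Q : ℕ → Finpartition (⊤ : Set X)) : ℕ → Finpartition (⊤ : Set X)
  | 0 => Q 0
  | n + 1 => Q (n + 1) ⊓
      (refiningSeq f Q n ⊓ Finset.univ.inf fun j => preimagePartition (f j) (refiningSeq f Q n))

section RefiningSeq

variable {ι : Type*} [Fintype ι] (f : ι → X → X) (Q : ℕ → Finpartition (⊤ : Set X))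

theorem refiningSeq_le : ∀ n, refiningSeq f Q n ≤ Q n
  | 0 => le_rfl
  | _ + 1 => inf_le_left

theorem refiningSeq_succ_le (n : ℕ) : refiningSeq f Q (n + 1) ≤ refiningSeq f Q n :=
  inf_le_right.trans inf_le_left

theorem refiningSeq_succ_le_preimagePartition (n : ℕ) (j : ι) :
    refiningSeq f Q (n + 1) ≤ preimagePartition (f j) (refiningSeq f Q n) :=
  inf_le_right.trans <| inf_le_right.trans <| Finset.inf_le (Finset.mem_univ j)

end RefiningSeq

end Partitions

section ContinuitySets

variable {X Y : Type*} [TopologicalSpace X] [MeasurableSpace X] [TopologicalSpace Y]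
  [MeasurableSpace Y] {μ : Measure X} {ν : Measure Y} {s t : Set X}

/-- A `μ`-continuity set, in the sense of the portmanteau theorem: a measurable set whose frontier
is `μ`-null. -/
structure IsContinuitySet (μ : Measure X) (s : Set X) : Prop where
  measurableSet : MeasurableSet s
  measure_frontier : μ (frontier s) = 0

namespace IsContinuitySet

theorem univ : IsContinuitySet μ Set.univ :=
  ⟨.univ, by simp⟩

theorem compl (hs : IsContinuitySet μ s) : IsContinuitySet μ sᶜ :=
  ⟨hs.measurableSet.compl, by rw [frontier_compl, hs.measure_frontier]⟩

theorem inter (hs : IsContinuitySet μ s) (ht : IsContinuitySet μ t) :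
    IsContinuitySet μ (s ∩ t) :=
  ⟨hs.measurableSet.inter ht.measurableSet,
    null_frontier_inter hs.measure_frontier ht.measure_frontier⟩

theorem preimage {f : X → Y} {s : Set Y} (hs : IsContinuitySet ν s) (hf : Continuous f)
    (hfμ : Measure.QuasiMeasurePreserving f μ ν) : IsContinuitySet μ (f ⁻¹' s) :=
  ⟨hfμ.measurable hs.measurableSet,
    measure_mono_null (hf.frontier_preimage_subset s) (hfμ.preimage_null hs.measure_frontier)⟩

end IsContinuitySet

/-- A finite partition all of whose parts are `μ`-continuity sets. -/
def IsContinuityPartition (μ : Measure X) (P : Finpartition (⊤ : Set X)) : Prop :=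
  ∀ E ∈ P.parts, IsContinuitySet μ E

namespace IsContinuityPartition

variable {P Q : Finpartition (⊤ : Set X)}

open scoped Classical in
theorem top : IsContinuityPartition μ (⊤ : Finpartition (⊤ : Set X)) := by
  intro E hE
  rw [Finset.mem_singleton.1 (Finpartition.parts_top_subset _ hE)]
  exact .univ

open scoped Classical in
theorem inf (hP : IsContinuityPartition μ P) (hQ : IsContinuityPartition μ Q) :
    IsContinuityPartition μ (P ⊓ Q) := by
  intro E hE
  rw [Finpartition.parts_inf] at hE
  obtain ⟨⟨F, G⟩, hFG, rfl⟩ := Finset.mem_image.1 (Finset.mem_of_mem_erase hE)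
  obtain ⟨hF, hG⟩ := Finset.mem_product.1 hFG
  exact (hP F hF).inter (hQ G hG)

open scoped Classical in
theorem finset_inf {ι : Type*} {T : Finset ι} {R : ι → Finpartition (⊤ : Set X)}
    (hR : ∀ i ∈ T, IsContinuityPartition μ (R i)) : IsContinuityPartition μ (T.inf R) :=
  Finset.inf_induction top (fun _ hP _ hQ => hP.inf hQ) hR

theorem preimage {f : X → Y} {P : Finpartition (⊤ : Set Y)}
    (hP : IsContinuityPartition ν P) (hf : Continuous f)
    (hfμ : Measure.QuasiMeasurePreserving f μ ν) :
    IsContinuityPartition μ (preimagePartition f P) := by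
  intro E hE
  obtain ⟨-, F, hF, rfl⟩ := mem_preimagePartition.1 hE
  exact (hP F hF).preimage hf hfμ

end IsContinuityPartition

theorem isContinuityPartition_complPartition (hs : IsContinuitySet μ s) :
    IsContinuityPartition μ (complPartition s) := by
  intro E hE
  obtain rfl | rfl := eq_or_eq_compl_of_mem_complPartition hE
  exacts [hs, hs.compl]

theorem isContinuityPartition_refiningSeq {ι : Type*} [Fintype ι] {f : ι → X → X}
    (hf : ∀ j, Continuous (f j)) (hfμ : ∀ j, Measure.QuasiMeasurePreserving (f j) μ μ)
    {Q : ℕ → Finpartition (⊤ : Set X)} (hQ : ∀ n, IsContinuityPartition μ (Q n)) :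
    ∀ n, IsContinuityPartition μ (refiningSeq f Q n)
  | 0 => hQ 0
  | n + 1 =>
    have ih := isContinuityPartition_refiningSeq hf hfμ hQ n
    (hQ (n + 1)).inf <| ih.inf <| .finset_inf fun j _ => ih.preimage (hf j) (hfμ j)

end ContinuitySets

section SmallContinuityPartitions

variable {X : Type*} [PseudoMetricSpace X] [MeasurableSpace X] [OpensMeasurableSpace X]
  (μ : Measure X) [SFinite μ]

theorem exists_isContinuitySet_ball (x : X) {a b : ℝ} (hab : a < b) :
    ∃ r ∈ Set.Ioo a b, IsContinuitySet μ (Metric.ball x r) := by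
  obtain ⟨r, hr, hr_null⟩ := exists_null_frontier_thickening μ {x} hab
  rw [Metric.thickening_singleton] at hr_null
  exact ⟨r, hr, measurableSet_ball, hr_null⟩

theorem exists_finset_isContinuitySet_cover_diam_lt (hX : TotallyBounded (Set.univ : Set X))
    {ε : ℝ} (hε : 0 < ε) :
    ∃ C : Finset (Set X), ⋃₀ (C : Set (Set X)) = Set.univ ∧
      ∀ s ∈ C, IsContinuitySet μ s ∧ Metric.diam s < ε := by
  classical
  choose r hr hr_cont using fun x : X =>
    exists_isContinuitySet_ball μ x (show ε / 4 < ε / 2 by linarith)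
  obtain ⟨t, ht, hcover⟩ := Metric.totallyBounded_iff.1 hX (ε / 4) (by positivity)
  lift t to Finset X using ht
  refine ⟨t.image fun x => Metric.ball x (r x), ?_, Finset.forall_mem_image.2 fun x _ => ?_⟩
  · rw [Finset.coe_image, Set.sUnion_image, Set.eq_univ_iff_forall]
    exact fun x => Set.iUnion₂_mono (fun y _ => Metric.ball_subset_ball (hr y).1.le)
      (hcover (Set.mem_univ x))
  · have hdiam : Metric.diam (Metric.ball x (r x)) ≤ 2 * r x :=
      Metric.diam_ball (by linarith [(hr x).1])
    exact ⟨hr_cont x, by linarith [(hr x).2]⟩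

theorem exists_isContinuityPartition_diam_lt (hX : TotallyBounded (Set.univ : Set X))
    {ε : ℝ} (hε : 0 < ε) :
    ∃ P : Finpartition (⊤ : Set X), IsContinuityPartition μ P ∧
      ∀ E ∈ P.parts, Metric.diam E < ε := by
  classical
  obtain ⟨C, hcover, hC⟩ := exists_finset_isContinuitySet_cover_diam_lt μ hX hε
  refine ⟨C.inf complPartition, .finset_inf fun s hs =>
    isContinuityPartition_complPartition (hC s hs).1, ?_⟩
  intro E hE
  obtain ⟨s, hs, hEs⟩ := exists_subset_of_mem_inf_complPartition hcover hE
  exact (Metric.diam_mono hEs (hX.isBounded.subset s.subset_univ)).trans_lt (hC s hs).2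

end SmallContinuityPartitions

theorem measurePreserving_of_measure_image_eq {X Y : Type*} [MeasurableSpace X]
    [MeasurableSpace Y] {μ : Measure X} {ν : Measure Y} {f : X → Y} (hf : Measurable f)
    (hsurj : Function.Surjective f) (himage : ∀ E, MeasurableSet E → ν (f '' E) = μ E) :
    MeasurePreserving f μ ν :=
  ⟨hf, Measure.ext fun E hE => by
    rw [Measure.map_apply hf hE, ← himage _ (hf hE), Set.image_preimage_eq E hsurj]⟩

theorem stmt_7_general {X ι : Type*} [PseudoMetricSpace X] [MeasurableSpace X]
    [OpensMeasurableSpace X] [Finite ι] (hX : TotallyBounded (Set.univ : Set X))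
    (μ : Measure X) [SFinite μ] (f : ι → X → X) (hf : ∀ j, Continuous (f j))
    (hfμ : ∀ j, Measure.QuasiMeasurePreserving (f j) μ μ)
    (ε : ℕ → ℝ) (hε : ∀ n, 0 < ε n) :
    ∃ P : ℕ → Finset (Set X),
      (∀ n, (P n : Set (Set X)).PairwiseDisjoint id) ∧
      (∀ n, ⋃₀ (P n : Set (Set X)) = Set.univ) ∧
      (∀ n, ∀ E ∈ P n, E.Nonempty ∧ MeasurableSet E) ∧
      (∀ n, ∀ E ∈ P n, Metric.diam E < ε n) ∧
      (∀ n, ∀ E ∈ P n, μ (frontier E) = 0) ∧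
      (∀ n, ∀ E ∈ P (n + 1), ∃ F ∈ P n, E ⊆ F) ∧
      (∀ n, ∀ E ∈ P n, ∀ j,
        ∃ R : Finset (Set X), R ⊆ P (n + 1) ∧ f j ⁻¹' E = ⋃₀ (R : Set (Set X))) := by
  have := Fintype.ofFinite ι
  choose Q hQ hQ_diam using fun n => exists_isContinuityPartition_diam_lt μ hX (hε n)
  let P := refiningSeq f Q
  have hP : ∀ n, IsContinuityPartition μ (P n) :=
    isContinuityPartition_refiningSeq hf hfμ hQ
  have hP_diam (n : ℕ) (E : Set X) (hE : E ∈ (P n).parts) : Metric.diam E < ε n := by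
    obtain ⟨F, hF, hEF⟩ := refiningSeq_le f Q n hE
    exact (Metric.diam_mono hEF (hX.isBounded.subset F.subset_univ)).trans_lt (hQ_diam n F hF)
  exact ⟨fun n => (P n).parts, fun n => (P n).disjoint, fun n => sUnion_parts (P n),
    fun n E hE => ⟨Set.nonempty_iff_ne_empty.2 ((P n).ne_bot hE), (hP n E hE).measurableSet⟩,
    hP_diam, fun n E hE => (hP n E hE).measure_frontier,
    fun n _ hE => refiningSeq_succ_le f Q n hE,
    fun n _ hE j =>
      exists_preimage_eq_sUnion_of_le (refiningSeq_succ_le_preimagePartition f Q n j) hE⟩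

/-- Refining sequences of partitions adapted to an invariant measure: for homeomorphisms
`α_j` preserving a Borel probability measure `μ` and any positive sequence `d_n → 0`,
there are finite Borel partitions `P_n` of `X` into nonempty sets of diameter `< d_n`
with `μ`-null frontiers, each `P_{n+1}` refining `P_n`, and each `α_j⁻¹(E)` (`E ∈ P_n`)
a union of members of `P_{n+1}`. -/
theorem stmt_7 {X : Type*} [MetricSpace X] [CompactSpace X]
    [MeasurableSpace X] [BorelSpace X]
    (d : ℕ) (α : Fin d → X ≃ₜ X)
    (μ : Measure X) [IsProbabilityMeasure μ]
    (hinv : ∀ (j : Fin d) (E : Set X), MeasurableSet E → μ ((α j) '' E) = μ E)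
    (dseq : ℕ → ℝ) (hdpos : ∀ n, 0 < dseq n)
    (hdlim : Tendsto dseq atTop (nhds 0)) :
    ∃ P : ℕ → Finset (Set X),
      (∀ n, (P n : Set (Set X)).PairwiseDisjoint id) ∧
      (∀ n, ⋃₀ (P n : Set (Set X)) = Set.univ) ∧
      (∀ n, ∀ E ∈ P n, E.Nonempty ∧ MeasurableSet E) ∧
      (∀ n, ∀ E ∈ P n, Metric.diam E < dseq n) ∧
      (∀ n, ∀ E ∈ P n, μ (frontier E) = 0) ∧
      (∀ n, ∀ E ∈ P (n + 1), ∃ F ∈ P n, E ⊆ F) ∧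
      (∀ n, ∀ E ∈ P n, ∀ j : Fin d,
        ∃ Q : Finset (Set X), Q ⊆ P (n + 1) ∧ (α j) ⁻¹' E = ⋃₀ (Q : Set (Set X))) := by
  exact stmt_7_general isCompact_univ.totallyBounded μ (fun j => α j)
    (fun j => (α j).continuous) (fun j => (measurePreserving_of_measure_image_eq
      (α j).measurable (α j).surjective (hinv j)).quasiMeasurePreserving) dseq hdpos
end

section
/- Let X be a compact metric space, let μ be a Borel probability measure on X, and let d > 0. Then there exist finitely many pairwise disjoint Borel sets Y_1, …, Y_l with ⋃_{i=1}^{l} Y_i = X such that for each i: the diameter of Y_i is less than d; μ(∂Y_i) = 0; and Y_i = O_i ∪ S_i for some open set O_i ⊆ X and some set S_i ⊆ ∂O_i. -/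
open MeasureTheory

/-!
Cover the space by finitely many balls of radius less than `d / 2` with null frontiers: the
frontiers of the balls around a fixed center are pairwise disjoint, so all but countably many of
them are null. Then disjointify the *closures* of the balls. The frontier of each piece lies in the
union of the frontiers of the balls, so it is null. Moreover, each piece has the form
`closure B ∩ U`, where `U` is the complement of finitely many closed sets, hence open, and so it
lies between the open set `B ∩ U` and the closure of `B ∩ U`. (Disjointifying the open balls
themselves would not do: a piece `B₂ \ B₁` can be nonempty with empty interior.)
-/

section Semiopen

variable {X ι : Type*} [TopologicalSpace X]

/-- Semi-open sets in the sense of Levine: a set is semi-open if it lies in the closure of its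
interior, equivalently if it is an open set together with some frontier points of that open set. -/
def IsSemiopen (s : Set X) : Prop :=
  s ⊆ closure (interior s)

theorem isSemiopen_closure {u : Set X} (hu : IsOpen u) : IsSemiopen (closure u) :=
  closure_mono (hu.subset_interior_iff.2 subset_closure)

theorem IsSemiopen.sdiff_isClosed {s c : Set X} (hs : IsSemiopen s) (hc : IsClosed c) :
    IsSemiopen (s \ c) :=
  calc s \ c ⊆ cᶜ ∩ closure (interior s) := fun _ hx ↦ ⟨hx.2, hs hx.1⟩
    _ ⊆ closure (cᶜ ∩ interior s) := hc.isOpen_compl.inter_closure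
    _ = closure (interior (s \ c)) := by
      rw [Set.sdiff_eq, interior_inter, hc.isOpen_compl.interior_eq, Set.inter_comm]

theorem IsSemiopen.exists_isOpen_union_subset_frontier {s : Set X} (hs : IsSemiopen s) :
    ∃ o t : Set X, IsOpen o ∧ t ⊆ frontier o ∧ s = o ∪ t := by
  refine ⟨interior s, s \ interior s, isOpen_interior, ?_, ?_⟩
  · rw [isOpen_interior.frontier_eq]
    exact Set.sdiff_subset_sdiff_left hs
  · exact (Set.union_sdiff_cancel interior_subset).symm

theorem isSemiopen_disjointed_closure [Preorder ι] [LocallyFiniteOrderBot ι] {u : ι → Set X}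
    (hu : ∀ i, IsOpen (u i)) (i : ι) : IsSemiopen (disjointed (fun j ↦ closure (u j)) i) :=
  disjointedRec (fun _ _ ht ↦ ht.sdiff_isClosed isClosed_closure) (isSemiopen_closure (hu i))

end Semiopen

section NullFrontier

variable {X ι : Type*} [MeasurableSpace X] {μ : Measure X}

theorem null_frontier_closure [TopologicalSpace X] {s : Set X} (hs : μ (frontier s) = 0) :
    μ (frontier (closure s)) = 0 :=
  measure_mono_null frontier_closure_subset hs

theorem null_frontier_disjointed [TopologicalSpace X] [Preorder ι] [LocallyFiniteOrderBot ι]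
    {s : ι → Set X} (hs : ∀ i, μ (frontier (s i)) = 0) (i : ι) :
    μ (frontier (disjointed s i)) = 0 :=
  disjointedRec (p := fun t ↦ μ (frontier t) = 0)
    (fun _ j ht ↦ null_frontier_inter ht ((frontier_compl (s j)).symm ▸ hs j)) (hs i)

variable [PseudoMetricSpace X] [OpensMeasurableSpace X]

theorem exists_null_frontier_ball (μ : Measure X) [SFinite μ] (x : X) {a b : ℝ} (hab : a < b) :
    ∃ r ∈ Set.Ioo a b, μ (frontier (Metric.ball x r)) = 0 := by
  simpa only [Metric.thickening_singleton] using exists_null_frontier_thickening μ {x} hab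

theorem exists_finite_cover_null_frontier_ball (μ : Measure X) [SFinite μ] {s : Set X}
    (hs : TotallyBounded s) {ε : ℝ} (hε : 0 < ε) :
    ∃ (n : ℕ) (c : Fin n → X) (r : Fin n → ℝ), s ⊆ ⋃ i, Metric.ball (c i) (r i) ∧
      ∀ i, r i ∈ Set.Ioo 0 ε ∧ μ (frontier (Metric.ball (c i) (r i))) = 0 := by
  obtain ⟨t, t_finite, hst⟩ := Metric.totallyBounded_iff.1 hs (ε / 2) (half_pos hε)
  obtain ⟨n, c, -, rfl⟩ := t_finite.fin_param
  choose r hr null_frontier using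
    fun i ↦ exists_null_frontier_ball μ (c i) (half_lt_self hε)
  rw [Set.biUnion_range] at hst
  exact ⟨n, c, r, hst.trans (Set.iUnion_mono fun i ↦ Metric.ball_subset_ball (hr i).1.le),
    fun i ↦ ⟨⟨(half_pos hε).trans (hr i).1, (hr i).2⟩, null_frontier i⟩⟩

end NullFrontier

theorem diam_lt_of_subset_closure_ball {X : Type*} [PseudoMetricSpace X] {s : Set X} {x : X}
    {r d : ℝ} (hs : s ⊆ closure (Metric.ball x r)) (hr : r ∈ Set.Ioo 0 (d / 2)) :
    Metric.diam s < d :=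
  calc Metric.diam s ≤ 2 * r := Metric.diam_le_of_subset_closedBall hr.1.le
        (hs.trans Metric.closure_ball_subset_closedBall)
    _ < d := by linarith [hr.2]

theorem stmt_8_general {X : Type*} [PseudoMetricSpace X] [MeasurableSpace X]
    [OpensMeasurableSpace X] (hX : TotallyBounded (Set.univ : Set X)) (μ : Measure X) [SFinite μ]
    (d : ℝ) (hd : 0 < d) :
    ∃ (l : ℕ) (Y : Fin l → Set X),
      (∀ i j : Fin l, i ≠ j → Disjoint (Y i) (Y j)) ∧
      (⋃ i, Y i) = Set.univ ∧
      ∀ i : Fin l,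
        MeasurableSet (Y i) ∧
        Metric.diam (Y i) < d ∧
        μ (frontier (Y i)) = 0 ∧
        ∃ O S : Set X, IsOpen O ∧ S ⊆ frontier O ∧ Y i = O ∪ S := by
  obtain ⟨l, c, r, cover, hr⟩ := exists_finite_cover_null_frontier_ball μ hX (half_pos hd)
  let C : Fin l → Set X := fun i ↦ closure (Metric.ball (c i) (r i))
  refine ⟨l, disjointed C, fun i j hij ↦ disjoint_disjointed C hij, ?_, fun i ↦ ⟨?_, ?_, ?_, ?_⟩⟩
  · rw [iUnion_disjointed]
    exact Set.univ_subset_iff.1 (cover.trans (Set.iUnion_mono fun i ↦ subset_closure))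
  · exact disjointedRec (fun _ _ ht ↦ ht.diff measurableSet_closure) measurableSet_closure
  · exact diam_lt_of_subset_closure_ball (disjointed_subset C i) (hr i).1
  · exact null_frontier_disjointed (fun j ↦ null_frontier_closure (hr j).2) i
  · exact (isSemiopen_disjointed_closure (fun _ ↦ Metric.isOpen_ball)
      i).exists_isOpen_union_subset_frontier

/-- For any `d > 0`, a compact metric space with a Borel probability measure can be
partitioned into finitely many pairwise disjoint Borel sets of diameter `< d`, each with
`μ`-null frontier and each of the form `O ∪ S` with `O` open and `S ⊆ ∂O`. -/
theorem stmt_8 {X : Type*} [MetricSpace X] [CompactSpace X]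
    [MeasurableSpace X] [BorelSpace X]
    (μ : Measure X) [IsProbabilityMeasure μ] (d : ℝ) (hd : 0 < d) :
    ∃ (l : ℕ) (Y : Fin l → Set X),
      (∀ i j : Fin l, i ≠ j → Disjoint (Y i) (Y j)) ∧
      (⋃ i, Y i) = Set.univ ∧
      ∀ i : Fin l,
        MeasurableSet (Y i) ∧
        Metric.diam (Y i) < d ∧
        μ (frontier (Y i)) = 0 ∧
        ∃ O S : Set X, IsOpen O ∧ S ⊆ frontier O ∧ Y i = O ∪ S := by
  exact stmt_8_general isCompact_univ.totallyBounded μ d hd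
end
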